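/- (Remainder high-frequency estimate.) Let s, s₁, s₂ ∈ ℝ with s + d/2 = s₁ + s₂, 1 ≤ r ≤ ∞, 0 < ζ < ∞, and suppose s > −d/2. Then for all f ∈ B^{s₁}_{2,1}(𝕋_b^d) and g ∈ B^{s₂}_{2,r}(𝕋_b^d), the Bony remainder satisfies ‖R(f,g)‖^{h;ζ}_{B^s_{2,r}} ≤ C ‖f‖^{h;ζ/64}_{B^{s₁}_{2,1}} ‖g‖^{h;ζ/16}_{B^{s₂}_{2,r}}, with C independent of f, g, ζ. -/

import Mathlib

open MeasureTheory Filter Set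
open scoped ENNReal Topology

noncomputable section

namespace LowMach

attribute [local instance 10] Classical.propDecidable

/-- Frequency lattice of the torus `𝕋_b^d` (indices of Fourier modes). -/
abbrev Lat (d : ℕ) := Fin d → ℤ
/-- A scalar periodic distribution, represented by its Fourier coefficients. -/
abbrev SF (d : ℕ) := Lat d → ℂ
/-- A vector-field periodic distribution, represented by its Fourier coefficients. -/
abbrev VF (d : ℕ) := Lat d → Fin d → ℂ
/-- A `(d+1)`-component field `(a, u)`. -/
abbrev PairF (d : ℕ) := SF d × VF d

variable {d : ℕ} {E : Type*}

/-- `|𝕋_b^d| = ∏ 2π b_h`. -/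
def vol (b : Fin d → ℝ) : ℝ := ∏ h, (2 * Real.pi * b h)

/-- the real frequency `k_i/b_i` attached to the lattice point `k`. -/
def freq (b : Fin d → ℝ) (k : Lat d) (i : Fin d) : ℝ := (k i : ℝ) / b i

/-- `|k|`, the euclidean norm of the frequency. -/
def freqNorm (b : Fin d → ℝ) (k : Lat d) : ℝ := Real.sqrt (∑ i, (freq b k i) ^ 2)

/-- generalized sign: `1` iff the first nonzero component of `k` is positive. -/
def sg (k : Lat d) : ℝ := if ∃ i, 0 < k i ∧ ∀ j, j < i → k j = 0 then 1 else -1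

/-- `ℓ^r` norm (`r ∈ [1,∞]`) of an `ℝ≥0∞`-valued family. -/
def lr {α : Type*} (r : ℝ≥0∞) (f : α → ℝ≥0∞) : ℝ≥0∞ :=
  if r = ∞ then ⨆ a, f a else (∑' a, f a ^ r.toReal) ^ (1 / r.toReal)

/-- The time interval `(0,T)` (`T ∈ (0,∞]`). -/
def timeSet (T : ℝ≥0∞) : Set ℝ := {t : ℝ | 0 < t ∧ ENNReal.ofReal t < T}
/-- The time interval `[0,T]` (`= [0,∞)` if `T = ∞`). -/
def ctimeSet (T : ℝ≥0∞) : Set ℝ := {t : ℝ | 0 ≤ t ∧ ENNReal.ofReal t ≤ T}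

/-- `L^q(0,T)` norm of an `ℝ≥0∞`-valued function of time. -/
def timeLq (q T : ℝ≥0∞) (F : ℝ → ℝ≥0∞) : ℝ≥0∞ :=
  if q = ∞ then essSup F (volume.restrict (timeSet T))
  else (∫⁻ t in timeSet T, F t ^ q.toReal) ^ (1 / q.toReal)

/-- exponential on `ℝ≥0∞`. -/
def eexp (x : ℝ≥0∞) : ℝ≥0∞ := if x = ∞ then ∞ else ENNReal.ofReal (Real.exp x.toReal)

/-- The hypotheses on the fixed Littlewood–Paley bump function `φ`. -/
def GoodBump (φ : ℝ → ℝ) : Prop :=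
  ContDiff ℝ (⊤ : ℕ∞) φ ∧ (∀ ξ, 0 ≤ φ ξ) ∧
  (∀ ξ, φ ξ ≠ 0 → 3/4 ≤ |ξ| ∧ |ξ| ≤ 8/3) ∧
  (∀ ξ : ℝ, ξ ≠ 0 → HasSum (fun j : ℤ => φ ((2:ℝ) ^ (-j) * ξ)) 1)

section ENorms
variable [NormedAddCommGroup E] [NormedSpace ℝ E]

/-- the weight `φ(2^{-j}|k|)` of the `j`-th dyadic block. -/
def blockW (φ : ℝ → ℝ) (b : Fin d → ℝ) (j : ℤ) (k : Lat d) : ℝ :=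
  φ ((2:ℝ) ^ (-j) * freqNorm b k)

/-- the dyadic block `Δ_j` acting on Fourier coefficients. -/
def blockOp (φ : ℝ → ℝ) (b : Fin d → ℝ) (j : ℤ) (c : Lat d → E) : Lat d → E :=
  fun k => blockW φ b j k • c k

/-- the multiplier of the low-frequency cut-off `S_j` at `k ≠ 0`. -/
def SW (φ : ℝ → ℝ) (b : Fin d → ℝ) (j : ℤ) (k : Lat d) : ℝ :=
  ∑' j' : ℤ, if j' < j then blockW φ b j' k else 0

/-- the low-frequency cut-off `S_j g = ĝ₀/√|𝕋| + ∑_{j'≤j-1} Δ_{j'} g`. -/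
def SOp (φ : ℝ → ℝ) (b : Fin d → ℝ) (j : ℤ) (c : Lat d → E) : Lat d → E :=
  fun k => (if k = 0 then (1:ℝ) else SW φ b j k) • c k

/-- `L²(𝕋_b^d)` norm, via Parseval. -/
def eL2 (c : Lat d → E) : ℝ≥0∞ := (∑' k, (‖c k‖₊ : ℝ≥0∞) ^ 2) ^ (1/2 : ℝ)

/-- `‖ℱg‖_{ℓ¹}`. -/
def l1F (c : Lat d → E) : ℝ≥0∞ := ∑' k, (‖c k‖₊ : ℝ≥0∞)

/-- the mean-zero (underlined) part of a periodic distribution. -/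
def ul (c : Lat d → E) : Lat d → E := fun k => if k = 0 then 0 else c k

/-- `2^{js}‖Δ_j g‖_{L²}`. -/
def bw (φ : ℝ → ℝ) (b : Fin d → ℝ) (s : ℝ) (c : Lat d → E) (j : ℤ) : ℝ≥0∞ :=
  (2:ℝ≥0∞) ^ ((j : ℝ) * s) * eL2 (blockOp φ b j c)

/-- The Besov norm `‖·‖_{B^s_{2,r}}`. -/
def besovN (φ : ℝ → ℝ) (b : Fin d → ℝ) (s : ℝ) (r : ℝ≥0∞) (c : Lat d → E) : ℝ≥0∞ :=
  lr r (fun o : Option ℤ => o.elim (‖c 0‖₊ : ℝ≥0∞) (bw φ b s c))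

/-- High-frequency truncated Besov norm `‖·‖^{h;η}_{B^s_{2,r}}` (blocks `2^j ≥ η`). -/
def besovH (φ : ℝ → ℝ) (b : Fin d → ℝ) (η s : ℝ) (r : ℝ≥0∞) (c : Lat d → E) : ℝ≥0∞ :=
  lr r (fun j : ℤ => if η ≤ (2:ℝ) ^ j then bw φ b s c j else 0)

/-- Medium-frequency truncated Besov norm `‖·‖^{m;ζ,η}_{B^s_{2,r}}` (blocks `ζ ≤ 2^j < η`). -/
def besovM (φ : ℝ → ℝ) (b : Fin d → ℝ) (ζ η s : ℝ) (r : ℝ≥0∞) (c : Lat d → E) : ℝ≥0∞ :=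
  lr r (fun j : ℤ => if ζ ≤ (2:ℝ) ^ j ∧ (2:ℝ) ^ j < η then bw φ b s c j else 0)

/-- Low-frequency truncated Besov norm `‖·‖^{l;ζ}_{B^s_{2,r}}` (blocks `2^j < ζ`, plus zero mode). -/
def besovL (φ : ℝ → ℝ) (b : Fin d → ℝ) (ζ s : ℝ) (r : ℝ≥0∞) (c : Lat d → E) : ℝ≥0∞ :=
  lr r (fun o : Option ℤ =>
    o.elim (‖c 0‖₊ : ℝ≥0∞) (fun j => if (2:ℝ) ^ j < ζ then bw φ b s c j else 0))

/-- The Sobolev norm `‖·‖_{H^s}`. -/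
def hsN (b : Fin d → ℝ) (s : ℝ) (c : Lat d → E) : ℝ≥0∞ :=
  ((‖c 0‖₊ : ℝ≥0∞) ^ 2 +
    ∑' k, (if k = 0 then 0
      else ENNReal.ofReal (freqNorm b k ^ (2*s)) * (‖c k‖₊ : ℝ≥0∞) ^ 2)) ^ (1/2 : ℝ)

/-- The Chemin–Lerner norm `‖·‖_{L̃^q_T(B^s_{2,r})}`. -/
def CL (φ : ℝ → ℝ) (b : Fin d → ℝ) (q T : ℝ≥0∞) (s : ℝ) (r : ℝ≥0∞)
    (F : ℝ → Lat d → E) : ℝ≥0∞ :=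
  lr r (fun o : Option ℤ => o.elim (timeLq q T (fun t => (‖F t 0‖₊ : ℝ≥0∞)))
    (fun j => (2:ℝ≥0∞) ^ ((j:ℝ) * s) * timeLq q T (fun t => eL2 (blockOp φ b j (F t)))))

/-- `‖·‖^{h;η}_{L̃^q_T(B^s_{2,r})}`. -/
def CLH (φ : ℝ → ℝ) (b : Fin d → ℝ) (η : ℝ) (q T : ℝ≥0∞) (s : ℝ) (r : ℝ≥0∞)
    (F : ℝ → Lat d → E) : ℝ≥0∞ :=
  lr r (fun j : ℤ => if η ≤ (2:ℝ) ^ j then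
    (2:ℝ≥0∞) ^ ((j:ℝ) * s) * timeLq q T (fun t => eL2 (blockOp φ b j (F t))) else 0)

/-- `‖·‖^{m;ζ,η}_{L̃^q_T(B^s_{2,r})}`. -/
def CLM (φ : ℝ → ℝ) (b : Fin d → ℝ) (ζ η : ℝ) (q T : ℝ≥0∞) (s : ℝ) (r : ℝ≥0∞)
    (F : ℝ → Lat d → E) : ℝ≥0∞ :=
  lr r (fun j : ℤ => if ζ ≤ (2:ℝ) ^ j ∧ (2:ℝ) ^ j < η then
    (2:ℝ≥0∞) ^ ((j:ℝ) * s) * timeLq q T (fun t => eL2 (blockOp φ b j (F t))) else 0)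

/-- `‖·‖^{l;ζ}_{L̃^q_T(B^s_{2,r})}`. -/
def CLL (φ : ℝ → ℝ) (b : Fin d → ℝ) (ζ : ℝ) (q T : ℝ≥0∞) (s : ℝ) (r : ℝ≥0∞)
    (F : ℝ → Lat d → E) : ℝ≥0∞ :=
  lr r (fun o : Option ℤ => o.elim (timeLq q T (fun t => (‖F t 0‖₊ : ℝ≥0∞)))
    (fun j => if (2:ℝ) ^ j < ζ then
      (2:ℝ≥0∞) ^ ((j:ℝ) * s) * timeLq q T (fun t => eL2 (blockOp φ b j (F t))) else 0))

/-- `‖·‖_{L^q_T(B^s_{2,r})}`. -/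
def LqB (φ : ℝ → ℝ) (b : Fin d → ℝ) (q T : ℝ≥0∞) (s : ℝ) (r : ℝ≥0∞)
    (F : ℝ → Lat d → E) : ℝ≥0∞ :=
  timeLq q T (fun t => besovN φ b s r (F t))

/-- `‖·‖^{h;η}_{L^q_T(B^s_{2,r})}`. -/
def LqBH (φ : ℝ → ℝ) (b : Fin d → ℝ) (η : ℝ) (q T : ℝ≥0∞) (s : ℝ) (r : ℝ≥0∞)
    (F : ℝ → Lat d → E) : ℝ≥0∞ :=
  timeLq q T (fun t => besovH φ b η s r (F t))

/-- `‖·‖^{m;ζ,η}_{L^q_T(B^s_{2,r})}`. -/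
def LqBM (φ : ℝ → ℝ) (b : Fin d → ℝ) (ζ η : ℝ) (q T : ℝ≥0∞) (s : ℝ) (r : ℝ≥0∞)
    (F : ℝ → Lat d → E) : ℝ≥0∞ :=
  timeLq q T (fun t => besovM φ b ζ η s r (F t))

/-- `‖·‖^{l;ζ}_{L^q_T(B^s_{2,r})}`. -/
def LqBL (φ : ℝ → ℝ) (b : Fin d → ℝ) (ζ : ℝ) (q T : ℝ≥0∞) (s : ℝ) (r : ℝ≥0∞)
    (F : ℝ → Lat d → E) : ℝ≥0∞ :=
  timeLq q T (fun t => besovL φ b ζ s r (F t))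

/-- `‖·‖_{L^q_T(H^s)}`. -/
def LqHs (b : Fin d → ℝ) (q T : ℝ≥0∞) (s : ℝ) (F : ℝ → Lat d → E) : ℝ≥0∞ :=
  timeLq q T (fun t => hsN b s (F t))

/-- continuity in time, on `[0,T]`, with respect to a seminorm `N`. -/
def ContB (T : ℝ≥0∞) (N : (Lat d → E) → ℝ≥0∞) (F : ℝ → Lat d → E) : Prop :=
  ∀ t₀ ∈ ctimeSet T,
    Tendsto (fun t => N (fun k => F t k - F t₀ k)) (nhdsWithin t₀ (ctimeSet T)) (nhds 0)

/-- Fourier truncation: keep frequencies `|k| ≤ M`. -/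
def cutL (b : Fin d → ℝ) (M : ℝ) (c : Lat d → E) : Lat d → E :=
  fun k => if freqNorm b k ≤ M then c k else 0

/-- Fourier truncation: keep frequencies `|k| > M`. -/
def cutH (b : Fin d → ℝ) (M : ℝ) (c : Lat d → E) : Lat d → E :=
  fun k => if freqNorm b k ≤ M then 0 else c k

end ENorms

/-! ### Differential and product operators on Fourier coefficients -/

/-- product of two scalar periodic distributions (convolution of coefficients). -/
def mulC (b : Fin d → ℝ) (f g : SF d) : SF d :=
  fun m => ((Real.sqrt (vol b) : ℂ))⁻¹ * ∑' k, f k * g (m - k)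

/-- `∂_i`. -/
def pd (b : Fin d → ℝ) (i : Fin d) (f : SF d) : SF d :=
  fun k => Complex.I * (freq b k i : ℂ) * f k

/-- `div`. -/
def divC (b : Fin d → ℝ) (u : VF d) : SF d :=
  fun k => ∑ i, Complex.I * (freq b k i : ℂ) * u k i

/-- `∇`. -/
def gradC (b : Fin d → ℝ) (f : SF d) : VF d :=
  fun k i => Complex.I * (freq b k i : ℂ) * f k

/-- `Δ` on scalars. -/
def lapS (b : Fin d → ℝ) (f : SF d) : SF d :=
  fun k => ((-(freqNorm b k ^ 2) : ℝ) : ℂ) * f k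

/-- `Δ` on vector fields. -/
def lapV (b : Fin d → ℝ) (u : VF d) : VF d :=
  fun k i => ((-(freqNorm b k ^ 2) : ℝ) : ℂ) * u k i

/-- `ℚ = -∇(-Δ)⁻¹ div`, the projection onto gradient fields. -/
def QC (b : Fin d → ℝ) (u : VF d) : VF d := fun k i =>
  if k = 0 then 0 else
    (freq b k i : ℂ) * (∑ j, (freq b k j : ℂ) * u k j) / ((freqNorm b k ^ 2 : ℝ) : ℂ)

/-- `ℙ = I - ℚ`, the Leray projection. -/
def PC (b : Fin d → ℝ) (u : VF d) : VF d := fun k i => u k i - QC b u k i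

/-- product of a scalar field and a vector field. -/
def smulV (b : Fin d → ℝ) (f : SF d) (u : VF d) : VF d :=
  fun k i => mulC b f (fun k' => u k' i) k

/-- scalar product `u · v` of two vector fields. -/
def dotC (b : Fin d → ℝ) (u v : VF d) : SF d :=
  fun k => ∑ i, mulC b (fun k' => u k' i) (fun k' => v k' i) k

/-- `u · ∇v`. -/
def dotGrad (b : Fin d → ℝ) (u v : VF d) : VF d :=
  fun k i => ∑ j, mulC b (fun k' => u k' j) (pd b j (fun k' => v k' i)) k

/-- the Lamé operator `𝒜u = μΔu + (μ+λ)∇div u`. -/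
def AOp (b : Fin d → ℝ) (μ lam : ℝ) (u : VF d) : VF d := fun k i =>
  (μ : ℂ) * ((-(freqNorm b k ^ 2) : ℝ) : ℂ) * u k i
  + ((μ + lam : ℝ) : ℂ) * Complex.I * (freq b k i : ℂ) * divC b u k

/-! ### Spatial realization -/

/-- the function realizing a periodic distribution. -/
def toFun (b : Fin d → ℝ) (c : SF d) (x : EuclideanSpace ℝ (Fin d)) : ℂ :=
  ((Real.sqrt (vol b) : ℂ))⁻¹ *
    ∑' k, c k * Complex.exp (Complex.I * ((∑ i, freq b k i * x i : ℝ) : ℂ))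

/-- `L^∞` norm of a scalar periodic distribution. -/
def linf (b : Fin d → ℝ) (c : SF d) : ℝ≥0∞ :=
  ⨆ x : EuclideanSpace ℝ (Fin d), (‖toFun b c x‖₊ : ℝ≥0∞)

/-- `L^∞` norm of a vector field. -/
def linfV (b : Fin d → ℝ) (u : VF d) : ℝ≥0∞ := ⨆ i : Fin d, linf b (fun k => u k i)

/-- `L^∞` norm of a matrix field. -/
def linfM (b : Fin d → ℝ) (m : Lat d → Fin d → Fin d → ℂ) : ℝ≥0∞ :=
  ⨆ i : Fin d, ⨆ i' : Fin d, linf b (fun k => m k i i')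

/-- the gradient `∇u` of a vector field, a matrix field. -/
def gradVF (b : Fin d → ℝ) (u : VF d) : Lat d → Fin d → Fin d → ℂ :=
  fun k i i' => Complex.I * (freq b k i : ℂ) * u k i'

/-- `L^∞((0,T) × 𝕋_b^d)` norm of a time dependent scalar field. -/
def linfST (b : Fin d → ℝ) (T : ℝ≥0∞) (a : ℝ → SF d) : ℝ≥0∞ :=
  ⨆ t ∈ timeSet T, linf b (a t)

/-- a fundamental domain of the torus. -/
def box (b : Fin d → ℝ) : Set (EuclideanSpace ℝ (Fin d)) :=
  {x | ∀ i, x i ∈ Set.Ico (0:ℝ) (2 * Real.pi * b i)}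

/-- Fourier coefficients of the composition `G ∘ f` for a real-valued `f`. -/
def compC (b : Fin d → ℝ) (G : ℝ → ℝ) (c : SF d) : SF d := fun k =>
  ((Real.sqrt (vol b) : ℂ))⁻¹ *
    ∫ x in box b, (G ((toFun b c x).re) : ℂ) *
      Complex.exp (-Complex.I * ((∑ i, freq b k i * x i : ℝ) : ℂ))

/-! ### `L^p`-based Besov norms (general `p`) -/

/-- `L^p(𝕋_b^d)` norm of the `j`-th dyadic block. -/
def blockLp (φ : ℝ → ℝ) (b : Fin d → ℝ) (p : ℝ≥0∞) (j : ℤ) (c : SF d) : ℝ≥0∞ :=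
  eLpNorm (toFun b (blockOp φ b j c)) p (volume.restrict (box b))

/-- `L^p(𝕋_b^d)` norm of the zero mode `ĝ₀/√|𝕋_b^d|`. -/
def zmLp (b : Fin d → ℝ) (p : ℝ≥0∞) (c : SF d) : ℝ≥0∞ :=
  eLpNorm (fun _ : EuclideanSpace ℝ (Fin d) => ((Real.sqrt (vol b) : ℂ))⁻¹ * c 0) p
    (volume.restrict (box b))

/-- the Besov norm `‖·‖_{B^s_{p,r}}`. -/
def besovP (φ : ℝ → ℝ) (b : Fin d → ℝ) (p : ℝ≥0∞) (s : ℝ) (r : ℝ≥0∞) (c : SF d) : ℝ≥0∞ :=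
  lr r (fun o : Option ℤ =>
    o.elim (zmLp b p c) (fun j => (2:ℝ≥0∞) ^ ((j:ℝ) * s) * blockLp φ b p j c))

/-- the Chemin–Lerner norm `‖·‖_{L̃^q_T(B^s_{p,r})}`. -/
def CLP (φ : ℝ → ℝ) (b : Fin d → ℝ) (p q T : ℝ≥0∞) (s : ℝ) (r : ℝ≥0∞)
    (F : ℝ → SF d) : ℝ≥0∞ :=
  lr r (fun o : Option ℤ => o.elim (timeLq q T (fun t => zmLp b p (F t)))
    (fun j => (2:ℝ≥0∞) ^ ((j:ℝ) * s) * timeLq q T (fun t => blockLp φ b p j (F t))))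

/-- `‖·‖_{L^q_T(B^s_{p,r})}`. -/
def LqBP (φ : ℝ → ℝ) (b : Fin d → ℝ) (p q T : ℝ≥0∞) (s : ℝ) (r : ℝ≥0∞)
    (F : ℝ → SF d) : ℝ≥0∞ :=
  timeLq q T (fun t => besovP φ b p s r (F t))

/-! ### Bony decomposition -/

/-- the paraproduct `T_f g = ∑_j S_{j-2} f Δ_j g`. -/
def paraC (φ : ℝ → ℝ) (b : Fin d → ℝ) (f g : SF d) : SF d :=
  fun m => ∑' j : ℤ, mulC b (SOp φ b (j - 2) f) (blockOp φ b j g) m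

/-- the Bony remainder `R(f,g) = ∑_{|j-j'|≤2} Δ_j f Δ_{j'} g`. -/
def remC (φ : ℝ → ℝ) (b : Fin d → ℝ) (f g : SF d) : SF d :=
  fun m => ∑' p : ℤ × ℤ,
    if |p.1 - p.2| ≤ 2 then mulC b (blockOp φ b p.1 f) (blockOp φ b p.2 g) m else 0

/-! ### The acoustic wave group and the filtered/resonant bilinear operators -/

/-- the acoustic group `𝓛(τ) = e^{-τL}`, `L(a,u) = (div u, ∇a)`, computed explicitly
on Fourier modes. -/
def Lgrp (b : Fin d → ℝ) (τ : ℝ) (A : PairF d) : PairF d :=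
  (fun k =>
    if k = 0 then A.1 k else
      ((Real.cos (freqNorm b k * τ) : ℝ) : ℂ) * A.1 k -
        Complex.I * ((Real.sin (freqNorm b k * τ) : ℝ) : ℂ) *
          ((∑ i, (freq b k i : ℂ) * A.2 k i) / ((freqNorm b k : ℝ) : ℂ)),
   fun k i =>
    if k = 0 then A.2 k i else
      A.2 k i +
        (((Real.cos (freqNorm b k * τ) - 1 : ℝ) : ℂ) *
            ((∑ j, (freq b k j : ℂ) * A.2 k j) / ((freqNorm b k : ℝ) : ℂ)) -
          Complex.I * ((Real.sin (freqNorm b k * τ) : ℝ) : ℂ) * A.1 k) *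
          ((freq b k i / freqNorm b k : ℝ) : ℂ))

/-- membership in `(Ker L)^⊥ = {(a,∇g) : a ∈ L² mean-zero, g ∈ H¹}`. -/
def memKerLp (b : Fin d → ℝ) (A : PairF d) : Prop :=
  A.1 0 = 0 ∧ eL2 A.1 < ⊤ ∧
  ∃ g : SF d, (∀ k i, A.2 k i = Complex.I * (freq b k i : ℂ) * g k) ∧ hsN b 1 g < ⊤

/-- coordinates of a pair in the eigenbasis `Φ_k^α` of `L`. -/
def eig (b : Fin d → ℝ) (A : PairF d) (α : ℝ) (k : Lat d) : ℂ :=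
  (A.1 k - ((α * sg k : ℝ) : ℂ) *
    (∑ i, ((freq b k i / freqNorm b k : ℝ) : ℂ) * A.2 k i)) / ((Real.sqrt 2 : ℝ) : ℂ)

/-- reconstruction of a pair from coordinates in the eigenbasis `Φ_k^α`. -/
def fromEig (b : Fin d → ℝ) (Ec : ℝ → Lat d → ℂ) : PairF d :=
  (fun k => (Ec 1 k + Ec (-1) k) / ((Real.sqrt 2 : ℝ) : ℂ),
   fun k i => -(((sg k * (freq b k i / freqNorm b k) : ℝ)) : ℂ) *
      (Ec 1 k - Ec (-1) k) / ((Real.sqrt 2 : ℝ) : ℂ))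

/-- the filtered operator `𝒬₁^ε(u,B)` (with `τ = t/ε`). -/
def Q1e (b : Fin d → ℝ) (τ : ℝ) (u : VF d) (B : PairF d) : PairF d :=
  Lgrp b (-τ)
    ((fun m => divC b (smulV b (Lgrp b τ B).1 u) m),
     (fun m i => QC b (fun k i' =>
        dotGrad b u (Lgrp b τ B).2 k i' + dotGrad b (Lgrp b τ B).2 u k i') m i))

/-- the modified filtered operator `𝒬̌₁^ε(u,B)`. -/
def Qc1e (b : Fin d → ℝ) (τ : ℝ) (u : VF d) (B : PairF d) : PairF d :=
  Lgrp b (-τ)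
    ((fun m => divC b (smulV b (Lgrp b τ B).1 u) m),
     (fun m i => QC b (fun k i' => ∑ j, Complex.I * (freq b k j : ℂ) *
        mulC b (fun k' => u k' j) (fun k' => (Lgrp b τ B).2 k' i') k) m i))

/-- `𝒬̃₁^ε := 𝒬₁^ε - 𝒬̌₁^ε`. -/
def Qt1e (b : Fin d → ℝ) (τ : ℝ) (u : VF d) (B : PairF d) : PairF d :=
  (fun k => (Q1e b τ u B).1 k - (Qc1e b τ u B).1 k,
   fun k i => (Q1e b τ u B).2 k i - (Qc1e b τ u B).2 k i)

/-- the filtered operator `𝒬₂^ε(A,B)` (with `τ = t/ε`). -/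
def Q2e (b : Fin d → ℝ) (κ τ : ℝ) (A B : PairF d) : PairF d :=
  Lgrp b (-τ)
    ((fun m => (1/2 : ℂ) * divC b (fun k i =>
        mulC b (Lgrp b τ A).1 (fun k' => (Lgrp b τ B).2 k' i) k
        + mulC b (fun k' => (Lgrp b τ A).2 k' i) (Lgrp b τ B).1 k) m),
     (fun m i => (1/2 : ℂ) * (gradC b (dotC b (Lgrp b τ A).2 (Lgrp b τ B).2) m i
        + (κ : ℂ) * gradC b (mulC b (Lgrp b τ A).1 (Lgrp b τ B).1) m i)))

/-- the resonant limit `𝒬₁(v,A)` of `𝒬₁^ε`. -/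
def Q1res (b : Fin d → ℝ) (v : VF d) (A : PairF d) : PairF d :=
  fromEig b (fun γ m =>
    if m = 0 then 0 else
      (Complex.I / ((Real.sqrt (vol b) : ℝ) : ℂ)) *
        ∑' k : Lat d, ∑ α : Bool,
          (if k ≠ 0 ∧
              (if α then (1:ℝ) else -1) * sg k * freqNorm b k = γ * sg m * freqNorm b m then
            eig b A (if α then (1:ℝ) else -1) k *
              (∑ i, (freq b k i : ℂ) * v (m - k) i) *
              (((∑ i, freq b k i * freq b m i) / (freqNorm b k * freqNorm b m) : ℝ) : ℂ)
          else 0))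

/-- the resonant limit `𝒬₂(A,B)` of `𝒬₂^ε`. -/
def Q2res (b : Fin d → ℝ) (κ : ℝ) (A B : PairF d) : PairF d :=
  fromEig b (fun γ m =>
    if m = 0 then 0 else
      (-Complex.I) * (((Real.sqrt (2 * vol b))⁻¹ : ℝ) : ℂ) * (((κ + 3) / 4 : ℝ) : ℂ) *
        ((γ * sg m * freqNorm b m : ℝ) : ℂ) *
        ∑' k : Lat d,
          (if k ≠ 0 ∧ m - k ≠ 0 ∧
              sg k * freqNorm b k + sg (m - k) * freqNorm b (m - k)
                = γ * sg m * freqNorm b m then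
            eig b A γ k * eig b B γ (m - k)
          else 0))

/-- pair of coefficient functions, seen as a single `(d+1)`-component field. -/
def pairC (A : PairF d) : Lat d → ℂ × (Fin d → ℂ) := fun k => (A.1 k, A.2 k)

/-- time-dependent version of `pairC`. -/
def pairT (V : ℝ → PairF d) : ℝ → Lat d → ℂ × (Fin d → ℂ) := fun t => pairC (V t)

/-- the difference of two time-dependent pairs, as a `(d+1)`-component field. -/
def pdiffT (A B : ℝ → PairF d) : ℝ → Lat d → ℂ × (Fin d → ℂ) :=
  fun t k => ((A t).1 k - (B t).1 k, fun i => (A t).2 k i - (B t).2 k i)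

/-! ### The systems -/

/-- `F = -div(aᵉ uᵉ)`, the right-hand side of the mass equation. -/
def Ffield (b : Fin d → ℝ) (a : ℝ → SF d) (u : ℝ → VF d) : ℝ → SF d :=
  fun t k => -(divC b (smulV b (a t) (u t)) k)

/-- `G = -κ a∇a - K̃(εa) a∇a - I(εa)𝒜u + f`, the nonlinear right-hand side of the
momentum equation. -/
def Gfield (b : Fin d → ℝ) (μ lam κ : ℝ) (Kt : ℝ → ℝ) (ε : ℝ) (f : ℝ → VF d)
    (a : ℝ → SF d) (u : ℝ → VF d) : ℝ → VF d :=
  fun t k i =>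
    -(κ : ℂ) * smulV b (a t) (gradC b (a t)) k i
    - smulV b (compC b (fun y => Kt (ε * y)) (a t)) (smulV b (a t) (gradC b (a t))) k i
    - smulV b (compC b (fun y => (ε * y) / (1 + ε * y)) (a t)) (AOp b μ lam (u t)) k i
    + f t k i

/-- the compressible system (CNS_ε), written on Fourier coefficients:
`∂ₜa + ε⁻¹ div u = -div(au)`,
`∂ₜu + u·∇u - 𝒜u + ε⁻¹∇a = -κa∇a - K̃(εa)a∇a - I(εa)𝒜u + f`. -/
def IsCNS (b : Fin d → ℝ) (μ lam κ : ℝ) (Kt : ℝ → ℝ) (ε : ℝ) (T : ℝ≥0∞)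
    (f : ℝ → VF d) (a₀ : SF d) (u₀ : VF d) (a : ℝ → SF d) (u : ℝ → VF d) : Prop :=
  a 0 = a₀ ∧ u 0 = u₀ ∧
  (∀ t ∈ timeSet T, ∀ k, HasDerivAt (fun s => a s k)
      (-((ε⁻¹ : ℝ) : ℂ) * divC b (u t) k + Ffield b a u t k) t) ∧
  (∀ t ∈ timeSet T, ∀ k, ∀ i, HasDerivAt (fun s => u s k i)
      (-(dotGrad b (u t) (u t) k i) + AOp b μ lam (u t) k i
        - ((ε⁻¹ : ℝ) : ℂ) * gradC b (a t) k i + Gfield b μ lam κ Kt ε f a u t k i) t)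

/-- the incompressible Navier–Stokes system (INS):
`∂ₜv - μΔv + v·∇v + ∇π = h`, `div v = 0`. -/
def IsINS (b : Fin d → ℝ) (μ : ℝ) (T : ℝ≥0∞) (h : ℝ → VF d) (v₀ : VF d)
    (v : ℝ → VF d) : Prop :=
  v 0 = v₀ ∧ (∀ t ∈ timeSet T, ∀ k, divC b (v t) k = 0) ∧
  ∃ pr : ℝ → SF d, ∀ t ∈ timeSet T, ∀ k, ∀ i,
    HasDerivAt (fun s => v s k i)
      ((μ : ℂ) * lapV b (v t) k i - dotGrad b (v t) (v t) k i
        - gradC b (pr t) k i + h t k i) t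

/-- the limit system (LS): `∂ₜV + 𝒬₁(v,V) + 𝒬₂(V,V) - (ν/2)ΔV = 0`. -/
def IsLS (b : Fin d → ℝ) (ν κ : ℝ) (T : ℝ≥0∞) (v : ℝ → VF d) (V₀ : PairF d)
    (V : ℝ → PairF d) : Prop :=
  V 0 = V₀ ∧
  (∀ t ∈ timeSet T, ∀ k, HasDerivAt (fun s => (V s).1 k)
      (-(Q1res b (v t) (V t)).1 k - (Q2res b κ (V t) (V t)).1 k
        + ((ν/2 : ℝ) : ℂ) * lapS b (V t).1 k) t) ∧
  (∀ t ∈ timeSet T, ∀ k, ∀ i, HasDerivAt (fun s => (V s).2 k i)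
      (-(Q1res b (v t) (V t)).2 k i - (Q2res b κ (V t) (V t)).2 k i
        + ((ν/2 : ℝ) : ℂ) * lapV b (V t).2 k i) t)

/-! ### Solution classes -/

/-- `(a,u) ∈ C̃_T(B̲^{d/2}_{2,1}) × (C̃_T(B^{d/2-1}_{2,1}) ∩ L¹_T(B̲^{d/2+1}_{2,1}))^d`. -/
def CNSClass (φ : ℝ → ℝ) (b : Fin d → ℝ) (T : ℝ≥0∞)
    (a : ℝ → SF d) (u : ℝ → VF d) : Prop :=
  (∀ t ∈ ctimeSet T, a t 0 = 0) ∧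
  ContB T (besovN φ b ((d:ℝ)/2) 1) a ∧ CL φ b ∞ T ((d:ℝ)/2) 1 a < ⊤ ∧
  ContB T (besovN φ b ((d:ℝ)/2 - 1) 1) u ∧ CL φ b ∞ T ((d:ℝ)/2 - 1) 1 u < ⊤ ∧
  LqB φ b 1 T ((d:ℝ)/2 + 1) 1 (fun t => ul (u t)) < ⊤

/-- `v ∈ (C̃_T(B^{d/2-1}_{2,1}) ∩ L¹_T(B̲^{d/2+1}_{2,1}))^d`. -/
def INSClass (φ : ℝ → ℝ) (b : Fin d → ℝ) (T : ℝ≥0∞) (v : ℝ → VF d) : Prop :=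
  ContB T (besovN φ b ((d:ℝ)/2 - 1) 1) v ∧ CL φ b ∞ T ((d:ℝ)/2 - 1) 1 v < ⊤ ∧
  LqB φ b 1 T ((d:ℝ)/2 + 1) 1 (fun t => ul (v t)) < ⊤

/-- `V ∈ (Ker L)^⊥ ∩ (C̃_T(B^{d/2-1}_{2,1}) ∩ L¹_T(B^{d/2+1}_{2,1}))^{d+1}`. -/
def LSClass (φ : ℝ → ℝ) (b : Fin d → ℝ) (T : ℝ≥0∞) (V : ℝ → PairF d) : Prop :=
  (∀ t ∈ ctimeSet T, memKerLp b (V t)) ∧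
  ContB T (besovN φ b ((d:ℝ)/2 - 1) 1) (pairT V) ∧
  CL φ b ∞ T ((d:ℝ)/2 - 1) 1 (pairT V) < ⊤ ∧
  LqB φ b 1 T ((d:ℝ)/2 + 1) 1 (pairT V) < ⊤

/-! ### The quantities of the energy framework -/

/-- `t ↦ ℚuᵉ(t)`. -/
def nQu (b : Fin d → ℝ) (u : ℝ → VF d) : ℝ → VF d := fun t => QC b (u t)

/-- `t ↦ ℙuᵉ(t)`. -/
def nPu (b : Fin d → ℝ) (u : ℝ → VF d) : ℝ → VF d := fun t => PC b (u t)

/-- `t ↦ (aᵉ(t), ℚuᵉ(t))` as a `(d+1)`-component field. -/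
def pairAQ (b : Fin d → ℝ) (a : ℝ → SF d) (u : ℝ → VF d) :
    ℝ → Lat d → ℂ × (Fin d → ℂ) :=
  fun t k => (a t k, QC b (u t) k)

/-- the filtered unknown `Vᵉ(t) = 𝓛(-t/ε)(aᵉ(t), ℚuᵉ(t))`. -/
def VepsT (b : Fin d → ℝ) (ε : ℝ) (a : ℝ → SF d) (u : ℝ → VF d) : ℝ → PairF d :=
  fun t => Lgrp b (-(t/ε)) (a t, QC b (u t))

/-- `t ↦ ℙuᵉ(t) - v(t)`. -/
def wdiffT (b : Fin d → ℝ) (u : ℝ → VF d) (v : ℝ → VF d) : ℝ → VF d :=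
  fun t k i => PC b (u t) k i - v t k i

/-- the quantity `X^ε(T)`. -/
def XeQ (φ : ℝ → ℝ) (b : Fin d → ℝ) (η₀ ε : ℝ) (T : ℝ≥0∞)
    (a : ℝ → SF d) (u : ℝ → VF d) : ℝ≥0∞ :=
  ENNReal.ofReal ε * CLH φ b (η₀/ε) ∞ T ((d:ℝ)/2) 1 a
  + (ENNReal.ofReal ε)⁻¹ * LqBH φ b (η₀/ε) 1 T ((d:ℝ)/2) 1 a
  + (CLL φ b (η₀/ε) ∞ T ((d:ℝ)/2 - 1) 1 a + LqBL φ b (η₀/ε) 1 T ((d:ℝ)/2 + 1) 1 a)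
  + (CL φ b ∞ T ((d:ℝ)/2 - 1) 1 (nQu b u) + LqB φ b 1 T ((d:ℝ)/2 + 1) 1 (nQu b u))

/-- the quantity `P^ε(T)` (and `P` if applied to `v`). -/
def PeQ (φ : ℝ → ℝ) (b : Fin d → ℝ) (T : ℝ≥0∞) (w : ℝ → VF d) : ℝ≥0∞ :=
  CL φ b ∞ T ((d:ℝ)/2 - 1) 1 w + LqB φ b 1 T ((d:ℝ)/2 + 1) 1 (fun t => ul (w t))

/-- the quantity `[aᵉ,uᵉ]^{ζ,ε}_{h,m}(T)`. -/
def BhmQ (φ : ℝ → ℝ) (b : Fin d → ℝ) (η₀ ζ ε : ℝ) (T : ℝ≥0∞)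
    (a : ℝ → SF d) (u : ℝ → VF d) : ℝ≥0∞ :=
  ENNReal.ofReal ε * CL φ b ∞ T ((d:ℝ)/2) 1 a
  + ENNReal.ofReal ε * CLH φ b (η₀/ε) ∞ T ((d:ℝ)/2) 1 a
  + (ENNReal.ofReal ε)⁻¹ * LqBH φ b (η₀/ε) 1 T ((d:ℝ)/2) 1 a
  + (CLH φ b (η₀/ε) ∞ T ((d:ℝ)/2 - 1) 1 (nQu b u)
      + LqBH φ b (η₀/ε) 1 T ((d:ℝ)/2 + 1) 1 (nQu b u))
  + (CLM φ b ζ (η₀/ε) ∞ T ((d:ℝ)/2 - 1) 1 (pairAQ b a u)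
      + LqBM φ b ζ (η₀/ε) 1 T ((d:ℝ)/2 + 1) 1 (pairAQ b a u))
  + (CLH φ b ζ ∞ T ((d:ℝ)/2 - 1) 1 (nPu b u) + LqBH φ b ζ 1 T ((d:ℝ)/2 + 1) 1 (nPu b u))

/-- the quantity `[W,u]^{ζ,ε}_l(T)`. -/
def BlQ (φ : ℝ → ℝ) (b : Fin d → ℝ) {E : Type*} [NormedAddCommGroup E] [NormedSpace ℝ E]
    (ζ : ℝ) (T : ℝ≥0∞) (W : ℝ → Lat d → E) (w : ℝ → VF d) : ℝ≥0∞ :=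
  (CLL φ b ζ ∞ T ((d:ℝ)/2 - 1) 1 W + CLL φ b ζ 2 T ((d:ℝ)/2) 1 W)
  + (CLL φ b ζ ∞ T ((d:ℝ)/2 - 1) 1 w + LqBL φ b ζ 1 T ((d:ℝ)/2 + 1) 1 (fun t => ul (w t)))

/-- the quantity `Y^{ζ,ε}(T)`. -/
def YQ (φ : ℝ → ℝ) (b : Fin d → ℝ) (η₀ ζ ε : ℝ) (T : ℝ≥0∞)
    (a : ℝ → SF d) (u : ℝ → VF d) : ℝ≥0∞ :=
  BhmQ φ b η₀ ζ ε T a u + BlQ φ b ζ T (pairAQ b a u) (nPu b u)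

/-- the quantity `D^{ζ,ε}(T)`. -/
def DQ (φ : ℝ → ℝ) (b : Fin d → ℝ) (η₀ ζ ε : ℝ) (T : ℝ≥0∞)
    (a : ℝ → SF d) (u : ℝ → VF d) (V : ℝ → PairF d) (v : ℝ → VF d) : ℝ≥0∞ :=
  BhmQ φ b η₀ ζ ε T a u + BlQ φ b ζ T (pdiffT (VepsT b ε a u) V) (wdiffT b u v)

/-- the quantity `Z^ε_θ(T) = ‖Vᵉ-V‖_{L̃^∞_T(H^{d/2-1-θ}) ∩ L²_T(H^{d/2-θ})}`. -/
def ZQ (φ : ℝ → ℝ) (b : Fin d → ℝ) (θ : ℝ) (T : ℝ≥0∞) (ε : ℝ)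
    (a : ℝ → SF d) (u : ℝ → VF d) (V : ℝ → PairF d) : ℝ≥0∞ :=
  CL φ b ∞ T ((d:ℝ)/2 - 1 - θ) 2 (pdiffT (VepsT b ε a u) V)
  + timeLq 2 T (fun t => hsN b ((d:ℝ)/2 - θ) (pdiffT (VepsT b ε a u) V t))

/-- the quantity `W^ε_θ(T) = ‖ℙuᵉ-v‖_{L̃^∞_T(B^{d/2-1-θ}_{2,1}) ∩ L¹_T(B̲^{d/2+1-θ}_{2,1})}`. -/
def WQ (φ : ℝ → ℝ) (b : Fin d → ℝ) (θ : ℝ) (T : ℝ≥0∞)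
    (u : ℝ → VF d) (v : ℝ → VF d) : ℝ≥0∞ :=
  CL φ b ∞ T ((d:ℝ)/2 - 1 - θ) 1 (wdiffT b u v)
  + LqB φ b 1 T ((d:ℝ)/2 + 1 - θ) 1 (fun t => ul (wdiffT b u v t))

/-- the quantity `X = ‖V‖_{L̃^∞_{T₀}(B^{d/2-1}_{2,1}) ∩ L¹_{T₀}(B^{d/2+1}_{2,1})}`. -/
def XQ (φ : ℝ → ℝ) (b : Fin d → ℝ) (T₀ : ℝ≥0∞) (V : ℝ → PairF d) : ℝ≥0∞ :=
  CL φ b ∞ T₀ ((d:ℝ)/2 - 1) 1 (pairT V) + LqB φ b 1 T₀ ((d:ℝ)/2 + 1) 1 (pairT V)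

/-- the quantity `X₀`. -/
def X0Q (φ : ℝ → ℝ) (b : Fin d → ℝ) (η₀ ε : ℝ) (a₀ : SF d) (u₀ : VF d) : ℝ≥0∞ :=
  besovL φ b (η₀/ε) ((d:ℝ)/2 - 1) 1 a₀
  + ENNReal.ofReal ε * besovH φ b (η₀/ε) ((d:ℝ)/2) 1 a₀
  + besovN φ b ((d:ℝ)/2 - 1) 1 (QC b u₀)

/-- the quantity `P₀`. -/
def P0Q (φ : ℝ → ℝ) (b : Fin d → ℝ) (u₀ : VF d) : ℝ≥0∞ :=
  besovN φ b ((d:ℝ)/2 - 1) 1 (PC b u₀)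

/-- the quantity `ℚ_f`, where `fQ'` is the time derivative of `ℚf`. -/
def QfQ (φ : ℝ → ℝ) (b : Fin d → ℝ) (T₀ : ℝ≥0∞) (S : ℝ) (f fQ' : ℝ → VF d) : ℝ≥0∞ :=
  LqB φ b 1 T₀ ((d:ℝ)/2 - 1) 1 (fun t => QC b (f t))
  + LqHs b ∞ T₀ (-S) (fun t => QC b (f t))
  + LqHs b 1 T₀ (-S) fQ'

/-- the quantity `ℚ_f(0) = ‖ℚf(0)‖_{H^{-S}}`. -/
def Qf0Q (b : Fin d → ℝ) (S : ℝ) (f : ℝ → VF d) : ℝ≥0∞ := hsN b (-S) (QC b (f 0))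

/-- the quantity `ℙ_f`. -/
def PfQ (φ : ℝ → ℝ) (b : Fin d → ℝ) (T₀ : ℝ≥0∞) (f : ℝ → VF d) : ℝ≥0∞ :=
  LqB φ b 1 T₀ ((d:ℝ)/2 - 1) 1 (fun t => PC b (f t))

/-!
Let `m` lie in the `q`-th dyadic annulus and let `|i - j| ≤ 2`. Then `Δ_i f · Δ_j g` has no mode
at `m` unless `q ≤ j + 4`, and by Cauchy–Schwarz its mode there is at most
`|𝕋|^{-1/2} ‖Δ_i f‖ ‖Δ_j g‖` in `L²`. The annulus contains `O(2^{qd})` lattice points, so passing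
from this bound on the modes to the `L²` norm costs a factor `2^{qd/2}`. As `s + d/2 = s₁ + s₂`,
`2^{qs} ‖Δ_q R(f,g)‖ ≲ ∑_{j ≥ q-4} 2^{(q-j)(s₁+s₂)} ∑_{|i-j| ≤ 2} 2^{is₁} ‖Δ_i f‖ 2^{js₂} ‖Δ_j g‖`.
The sum over `i` is at most the `ℓ¹` norm for `f`. What remains is a convolution with a geometric
sequence, summable because `s₁ + s₂ > 0`, and Young's inequality `ℓ¹ * ℓ^r ⊆ ℓ^r` concludes.
-/

section SequenceSpaces

variable {α : Type*}

lemma lr_one (f : α → ℝ≥0∞) : lr 1 f = ∑' a, f a := by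
  simp [lr]

lemma lr_mono (r : ℝ≥0∞) {f g : α → ℝ≥0∞} (h : ∀ a, f a ≤ g a) : lr r f ≤ lr r g := by
  unfold lr
  split_ifs
  · exact iSup_mono h
  · gcongr with a
    exact h a

lemma lr_const_mul {r : ℝ≥0∞} (hr : r ≠ 0) (c : ℝ≥0∞) (f : α → ℝ≥0∞) :
    lr r (fun a => c * f a) = c * lr r f := by
  unfold lr
  split_ifs with hr_top
  · rw [ENNReal.mul_iSup]
  · have hr_pos : 0 < r.toReal := ENNReal.toReal_pos hr hr_top
    simp_rw [ENNReal.mul_rpow_of_nonneg _ _ hr_pos.le, ENNReal.tsum_mul_left]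
    rw [ENNReal.mul_rpow_of_nonneg _ _ (by positivity), ← ENNReal.rpow_mul,
      mul_one_div_cancel hr_pos.ne', ENNReal.rpow_one]

lemma tsum_mul_le_L2_mul_L2 (f g : α → ℝ≥0∞) :
    ∑' a, f a * g a ≤ (∑' a, f a ^ 2) ^ (1 / 2 : ℝ) * (∑' a, g a ^ 2) ^ (1 / 2 : ℝ) := by
  refine ENNReal.summable.tsum_le_of_sum_le fun t => ?_
  refine (ENNReal.inner_le_Lp_mul_Lq t f g Real.HolderConjugate.two_two).trans ?_
  simp only [ENNReal.rpow_two]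
  gcongr <;> exact ENNReal.sum_le_tsum t

lemma rpow_tsum_mul_le {p : ℝ} (hp : 1 ≤ p) (w f : α → ℝ≥0∞) :
    (∑' a, w a * f a) ^ p ≤ (∑' a, w a) ^ (p - 1) * ∑' a, w a * f a ^ p := by
  have hp_pos : 0 < p := by linarith
  have hp_inv : 0 ≤ 1 - p⁻¹ := sub_nonneg.2 (inv_le_one_of_one_le₀ hp)
  have holder : ∑' a, w a * f a ≤ (∑' a, w a) ^ (1 - p⁻¹) * (∑' a, w a * f a ^ p) ^ p⁻¹ := by
    refine ENNReal.summable.tsum_le_of_sum_le fun t => ?_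
    refine (ENNReal.inner_le_weight_mul_Lp_of_nonneg t hp w f).trans ?_
    gcongr <;> exact ENNReal.sum_le_tsum t
  calc (∑' a, w a * f a) ^ p
      ≤ ((∑' a, w a) ^ (1 - p⁻¹) * (∑' a, w a * f a ^ p) ^ p⁻¹) ^ p := by gcongr
    _ = (∑' a, w a) ^ (p - 1) * ∑' a, w a * f a ^ p := by
        rw [ENNReal.mul_rpow_of_nonneg _ _ hp_pos.le, ENNReal.rpow_inv_rpow hp_pos.ne',
          ← ENNReal.rpow_mul, sub_mul, one_mul, inv_mul_cancel₀ hp_pos.ne']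

variable {G : Type*} [AddGroup G]

lemma tsum_rpow_conv_le {p : ℝ} (hp : 1 ≤ p) (k u : G → ℝ≥0∞) :
    ∑' x, (∑' y, k (x - y) * u y) ^ p ≤ (∑' x, k x) ^ p * ∑' x, u x ^ p := by
  have tsum_left (x : G) : ∑' y, k (x - y) = ∑' z, k z := (Equiv.subLeft x).tsum_eq k
  have tsum_right (y : G) : ∑' x, k (x - y) = ∑' z, k z := (Equiv.subRight y).tsum_eq k
  calc ∑' x, (∑' y, k (x - y) * u y) ^ p
      ≤ ∑' x, (∑' z, k z) ^ (p - 1) * ∑' y, k (x - y) * u y ^ p := by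
        gcongr with x
        exact (rpow_tsum_mul_le hp _ _).trans_eq (by rw [tsum_left])
    _ = (∑' z, k z) ^ (p - 1) * ((∑' z, k z) * ∑' y, u y ^ p) := by
        rw [ENNReal.tsum_mul_left, ENNReal.tsum_comm]
        simp_rw [ENNReal.tsum_mul_right, tsum_right, ENNReal.tsum_mul_left]
    _ = (∑' z, k z) ^ p * ∑' y, u y ^ p := by
        rw [← mul_assoc]
        nth_rw 2 [← ENNReal.rpow_one (∑' z, k z)]
        rw [← ENNReal.rpow_add_of_nonneg _ _ (by linarith) zero_le_one, sub_add_cancel]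

lemma lr_conv_le {r : ℝ≥0∞} (hr : 1 ≤ r) (k u : G → ℝ≥0∞) :
    lr r (fun x => ∑' y, k (x - y) * u y) ≤ (∑' x, k x) * lr r u := by
  unfold lr
  split_ifs with hr_top
  · refine iSup_le fun x => ?_
    rw [← (Equiv.subLeft x).tsum_eq k, ← ENNReal.tsum_mul_right]
    exact ENNReal.tsum_le_tsum fun y => mul_le_mul_right (le_iSup u y) _
  · have hp : 1 ≤ r.toReal := by simpa using ENNReal.toReal_mono hr_top hr
    have hp_pos : 0 < r.toReal := by linarith
    refine (ENNReal.rpow_le_rpow (tsum_rpow_conv_le hp k u) (by positivity)).trans_eq ?_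
    rw [ENNReal.mul_rpow_of_nonneg _ _ (by positivity), ← ENNReal.rpow_mul,
      mul_one_div_cancel hp_pos.ne', ENNReal.rpow_one]

end SequenceSpaces

/-- The geometric sequence `2^{nσ}` cut off above `N`. Convolution with it expresses the sum over
`j ≥ q - N` by which the high blocks of the factors contribute to the `q`-th block of a product. -/
def cutoffKernel (N : ℤ) (σ : ℝ) (n : ℤ) : ℝ≥0∞ :=
  if n ≤ N then (2 : ℝ≥0∞) ^ ((n : ℝ) * σ) else 0

lemma tsum_cutoffKernel_lt_top (N : ℤ) {σ : ℝ} (hσ : 0 < σ) : ∑' n, cutoffKernel N σ n < ⊤ := by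
  have hinj : Function.Injective fun m : ℕ => N - m := fun m m' h => by simpa using h
  have hsupp : Function.support (cutoffKernel N σ) ⊆ Set.range fun m : ℕ => N - m := by
    intro n hn
    have hnN : n ≤ N := by
      by_contra h
      exact hn (if_neg h)
    exact ⟨(N - n).toNat, by simp only; omega⟩
  have hgeom (m : ℕ) :
      cutoffKernel N σ (N - m) = (2 : ℝ≥0∞) ^ (N * σ) * ((2 : ℝ≥0∞) ^ (-σ)) ^ m := by
    rw [cutoffKernel, if_pos (by omega), ← ENNReal.rpow_natCast, ← ENNReal.rpow_mul,
      ← ENNReal.rpow_add _ _ two_ne_zero ENNReal.ofNat_ne_top]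
    congr 1
    push_cast
    ring
  rw [← hinj.tsum_eq hsupp]
  simp_rw [hgeom]
  rw [ENNReal.tsum_mul_left, ENNReal.tsum_geometric]
  refine ENNReal.mul_lt_top (by finiteness) ?_
  rw [ENNReal.inv_lt_top, tsub_pos_iff_lt]
  exact ENNReal.rpow_lt_one_of_one_lt_of_neg ENNReal.one_lt_two (neg_neg_of_pos hσ)

section Frequencies

variable (b : Fin d → ℝ)

lemma freqNorm_eq_norm (k : Lat d) : freqNorm b k = ‖WithLp.toLp 2 (freq b k)‖ := by
  simp [EuclideanSpace.norm_eq, freqNorm]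

lemma freqNorm_add_le (k l : Lat d) : freqNorm b (k + l) ≤ freqNorm b k + freqNorm b l := by
  have freq_add : freq b (k + l) = freq b k + freq b l := by
    ext i
    simp [freq, add_div]
  simp only [freqNorm_eq_norm, freq_add, WithLp.toLp_add]
  exact norm_add_le _ _

lemma freqNorm_nonneg (k : Lat d) : 0 ≤ freqNorm b k :=
  Real.sqrt_nonneg _

lemma freqNorm_zero : freqNorm b 0 = 0 := by
  simp [freqNorm, freq]

variable {b}

lemma abs_le_freqNorm_mul (hb : ∀ i, 0 < b i) (k : Lat d) (i : Fin d) :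
    |(k i : ℝ)| ≤ freqNorm b k * b i := by
  have h : ‖freq b k i‖ ≤ freqNorm b k :=
    (PiLp.norm_apply_le (WithLp.toLp 2 (freq b k)) i).trans_eq (freqNorm_eq_norm b k).symm
  rwa [freq, norm_div, Real.norm_eq_abs, Real.norm_of_nonneg (hb i).le, div_le_iff₀ (hb i)] at h

lemma one_le_freqNorm_mul_norm (hb : ∀ i, 0 < b i) {k : Lat d} (hk : k ≠ 0) :
    1 ≤ freqNorm b k * ‖b‖ := by
  obtain ⟨i, hi⟩ := Function.ne_iff.1 hk
  calc (1 : ℝ) ≤ |(k i : ℝ)| := mod_cast Int.one_le_abs hi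
    _ ≤ freqNorm b k * b i := abs_le_freqNorm_mul hb k i
    _ ≤ freqNorm b k * ‖b‖ := by
        gcongr
        · exact freqNorm_nonneg b k
        · exact (le_abs_self _).trans (norm_le_pi_norm b i)

lemma encard_freqNorm_le (hb : ∀ i, 0 < b i) (R : ℝ) :
    ({k : Lat d | k ≠ 0 ∧ freqNorm b k ≤ R}.encard : ℝ≥0∞) ≤
      ENNReal.ofReal (3 * R * ‖b‖) ^ d := by
  set S := {k : Lat d | k ≠ 0 ∧ freqNorm b k ≤ R}
  rcases S.eq_empty_or_nonempty with hS | ⟨k₀, hk₀, hk₀R⟩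
  · simp [hS]
  have hN : 1 ≤ R * ‖b‖ := (one_le_freqNorm_mul_norm hb hk₀).trans (by gcongr)
  set N := ⌊R * ‖b‖⌋
  have hsub : S ⊆ (Finset.Icc (fun _ => -N) fun _ => N : Finset (Lat d)) := by
    rintro k ⟨-, hkR⟩
    have hkN (i : Fin d) : |k i| ≤ N := by
      refine Int.le_floor.2 ?_
      push_cast
      calc |(k i : ℝ)| ≤ freqNorm b k * b i := abs_le_freqNorm_mul hb k i
        _ ≤ R * ‖b‖ := by
          gcongr
          · exact (hb i).le
          · exact (freqNorm_nonneg b k).trans hkR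
          · exact (le_abs_self _).trans (norm_le_pi_norm b i)
    rw [Finset.coe_Icc]
    exact ⟨fun i => (abs_le.1 (hkN i)).1, fun i => (abs_le.1 (hkN i)).2⟩
  have hcard : ((N + 1 - -N).toNat : ℝ) ≤ 3 * R * ‖b‖ := by
    have hN_nonneg : 0 ≤ N := Int.floor_nonneg.2 (by linarith)
    have hcast : ((N + 1 - -N).toNat : ℝ) = N + 1 - -N :=
      mod_cast Int.toNat_of_nonneg (by omega : 0 ≤ N + 1 - -N)
    linarith [Int.floor_le (R * ‖b‖)]
  calc (S.encard : ℝ≥0∞)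
      ≤ ((Finset.Icc (fun _ => -N) fun _ => N : Finset (Lat d)).card : ℝ≥0∞) := by
        exact_mod_cast (Set.encard_le_encard hsub).trans_eq (Set.encard_coe_eq_coe_finsetCard _)
    _ = ((N + 1 - -N).toNat : ℝ≥0∞) ^ d := by simp [Pi.card_Icc]
    _ ≤ ENNReal.ofReal (3 * R * ‖b‖) ^ d := by
        gcongr
        rw [← ENNReal.ofReal_natCast]
        exact ENNReal.ofReal_le_ofReal hcard

end Frequencies

section DyadicBlocks

variable {φ : ℝ → ℝ} {b : Fin d → ℝ}

lemma GoodBump.abs_le_one (hφ : GoodBump φ) (ξ : ℝ) : |φ ξ| ≤ 1 := by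
  obtain ⟨-, hnonneg, hsupp, hpart⟩ := hφ
  rw [abs_of_nonneg (hnonneg ξ)]
  rcases eq_or_ne ξ 0 with rfl | hξ
  · have hzero : φ 0 = 0 := by
      by_contra h
      have hlow := (hsupp 0 h).1
      norm_num at hlow
    simp [hzero]
  · simpa using le_hasSum (hpart ξ hξ) 0 fun j _ => hnonneg _

lemma freqNorm_mem_of_blockW_ne_zero (hsupp : ∀ ξ, φ ξ ≠ 0 → 3 / 4 ≤ |ξ| ∧ |ξ| ≤ 8 / 3)
    {j : ℤ} {k : Lat d} (hk : blockW φ b j k ≠ 0) :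
    freqNorm b k ∈ Set.Icc (3 / 4 * (2 : ℝ) ^ j) (8 / 3 * (2 : ℝ) ^ j) := by
  have h2j : (0 : ℝ) < 2 ^ j := by positivity
  have h := hsupp _ hk
  rw [abs_mul, abs_of_nonneg (freqNorm_nonneg b k), abs_of_pos (by positivity),
    zpow_neg, inv_mul_eq_div, le_div_iff₀ h2j, div_le_iff₀ h2j] at h
  exact h

lemma le_add_four_of_blockW_ne_zero (hsupp : ∀ ξ, φ ξ ≠ 0 → 3 / 4 ≤ |ξ| ∧ |ξ| ≤ 8 / 3)
    {q i j : ℤ} {k l : Lat d} (hij : i ≤ j + 2) (hk : blockW φ b i k ≠ 0)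
    (hl : blockW φ b j l ≠ 0) (hkl : blockW φ b q (k + l) ≠ 0) : q ≤ j + 4 := by
  by_contra! hq
  have hi : (2 : ℝ) ^ i ≤ 2 ^ j * 2 ^ 2 := by
    rw [← zpow_natCast, ← zpow_add₀ two_ne_zero]
    exact zpow_le_zpow_right₀ one_le_two hij
  have hj : (2 : ℝ) ^ j * 2 ^ 5 ≤ 2 ^ q := by
    rw [← zpow_natCast, ← zpow_add₀ two_ne_zero]
    exact zpow_le_zpow_right₀ one_le_two (by push_cast; omega)
  have h2j : (0 : ℝ) < 2 ^ j := by positivity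
  linarith [freqNorm_add_le b k l, (freqNorm_mem_of_blockW_ne_zero hsupp hk).2,
    (freqNorm_mem_of_blockW_ne_zero hsupp hl).2, (freqNorm_mem_of_blockW_ne_zero hsupp hkl).1]

variable [NormedAddCommGroup E]

lemma eL2_le_encard_rpow_mul {S : Set (Lat d)} {c : Lat d → E} {A : ℝ≥0∞}
    (hS : ∀ k ∉ S, c k = 0) (hA : ∀ k ∈ S, ‖c k‖ₑ ≤ A) :
    eL2 c ≤ (S.encard : ℝ≥0∞) ^ (1 / 2 : ℝ) * A := by
  have hsum : ∑' k, ‖c k‖ₑ ^ 2 ≤ S.encard * A ^ 2 := by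
    calc ∑' k, ‖c k‖ₑ ^ 2 = ∑' k : S, ‖c k‖ₑ ^ 2 :=
          (tsum_subtype_eq_of_support_subset fun k hk => by
            by_contra hkS
            simp [hS k hkS] at hk).symm
      _ ≤ ∑' _ : S, A ^ 2 := by
          gcongr with k
          exact hA k k.2
      _ = S.encard * A ^ 2 := ENNReal.tsum_set_const S _
  calc eL2 c ≤ (S.encard * A ^ 2) ^ (1 / 2 : ℝ) := ENNReal.rpow_le_rpow hsum (by norm_num)
    _ = (S.encard : ℝ≥0∞) ^ (1 / 2 : ℝ) * A := by
        rw [ENNReal.mul_rpow_of_nonneg _ _ (by norm_num), ← ENNReal.rpow_natCast,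
          ← ENNReal.rpow_mul]
        norm_num

variable [NormedSpace ℝ E]

lemma blockOp_eq_zero {j : ℤ} {k : Lat d} (h : blockW φ b j k = 0) (c : Lat d → E) :
    blockOp φ b j c k = 0 := by
  simp [blockOp, h]

lemma eL2_blockOp_le (hb : ∀ i, 0 < b i)
    (hsupp : ∀ ξ, φ ξ ≠ 0 → 3 / 4 ≤ |ξ| ∧ |ξ| ≤ 8 / 3) {M : ℝ} (hM : ∀ ξ, |φ ξ| ≤ M)
    {q : ℤ} {c : Lat d → E} {A : ℝ≥0∞} (hA : ∀ k, blockW φ b q k ≠ 0 → ‖c k‖ₑ ≤ A) :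
    eL2 (blockOp φ b q c) ≤ ENNReal.ofReal (8 * ‖b‖) ^ ((d : ℝ) / 2) *
      (2 : ℝ≥0∞) ^ ((q : ℝ) * ((d : ℝ) / 2)) * (ENNReal.ofReal M * A) := by
  set S := {k : Lat d | k ≠ 0 ∧ freqNorm b k ≤ 8 / 3 * (2 : ℝ) ^ q}
  have hblock (k : Lat d) (hk : blockW φ b q k ≠ 0) : k ∈ S := by
    obtain ⟨hlow, hup⟩ := freqNorm_mem_of_blockW_ne_zero hsupp hk
    refine ⟨?_, hup⟩
    rintro rfl
    rw [freqNorm_zero] at hlow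
    exact absurd hlow (not_le.2 (by positivity))
  have hcoeff (k : Lat d) : ‖blockOp φ b q c k‖ₑ ≤ ENNReal.ofReal M * A := by
    by_cases hk : blockW φ b q k = 0
    · simp [blockOp_eq_zero hk]
    · rw [blockOp, enorm_smul, Real.enorm_eq_ofReal_abs]
      exact mul_le_mul' (ENNReal.ofReal_le_ofReal (hM _)) (hA k hk)
  have hcard :
      (S.encard : ℝ≥0∞) ≤ (ENNReal.ofReal (8 * ‖b‖) * (2 : ℝ≥0∞) ^ (q : ℝ)) ^ (d : ℝ) := by
    have two_rpow : (2 : ℝ≥0∞) ^ (q : ℝ) = ENNReal.ofReal ((2 : ℝ) ^ q) := by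
      rw [← Real.rpow_intCast, ← ENNReal.ofReal_rpow_of_pos two_pos, ENNReal.ofReal_ofNat]
    refine (encard_freqNorm_le hb _).trans_eq ?_
    rw [ENNReal.rpow_natCast, two_rpow, ← ENNReal.ofReal_mul (by positivity)]
    ring_nf
  calc eL2 (blockOp φ b q c)
      ≤ (S.encard : ℝ≥0∞) ^ (1 / 2 : ℝ) * (ENNReal.ofReal M * A) :=
        eL2_le_encard_rpow_mul (fun k hk => blockOp_eq_zero (not_not.1 (mt (hblock k) hk)) c)
          fun k _ => hcoeff k
    _ ≤ ((ENNReal.ofReal (8 * ‖b‖) * (2 : ℝ≥0∞) ^ (q : ℝ)) ^ (d : ℝ)) ^ (1 / 2 : ℝ) *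
          (ENNReal.ofReal M * A) := by gcongr
    _ = _ := by
        rw [← ENNReal.rpow_mul, mul_one_div, ENNReal.mul_rpow_of_nonneg _ _ (by positivity),
          ← ENNReal.rpow_mul]

end DyadicBlocks

section HighFrequencyBlocks

variable [NormedAddCommGroup E] [NormedSpace ℝ E]

/-- The sequence `2^{js} ‖Δ_j c‖_{L²}` restricted to `2^j ≥ η`, whose `ℓ^r` norm is
`‖c‖^{h;η}_{B^s_{2,r}}`. -/
def highBlock (φ : ℝ → ℝ) (b : Fin d → ℝ) (η s : ℝ) (c : Lat d → E) (j : ℤ) : ℝ≥0∞ :=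
  if η ≤ (2 : ℝ) ^ j then bw φ b s c j else 0

variable (φ : ℝ → ℝ) (b : Fin d → ℝ)

lemma besovH_eq_lr_highBlock (η s : ℝ) (r : ℝ≥0∞) (c : Lat d → E) :
    besovH φ b η s r c = lr r (highBlock φ b η s c) :=
  rfl

lemma highBlock_div_two_pow {ζ : ℝ} {q j : ℤ} (n : ℕ) (hq : ζ ≤ (2 : ℝ) ^ q) (hqj : q ≤ j + n)
    (s : ℝ) (c : Lat d → E) : highBlock φ b (ζ / 2 ^ n) s c j = bw φ b s c j := by
  refine if_pos ((div_le_iff₀ (by positivity)).2 (hq.trans ?_))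
  rw [← zpow_natCast, ← zpow_add₀ two_ne_zero]
  exact zpow_le_zpow_right₀ one_le_two hqj

end HighFrequencyBlocks

section Remainder

variable {φ : ℝ → ℝ} {b : Fin d → ℝ}

variable (b) in
lemma enorm_mulC_le (f g : SF d) (m : Lat d) :
    ‖mulC b f g m‖ₑ ≤ ‖(Real.sqrt (vol b) : ℂ)⁻¹‖ₑ * (eL2 f * eL2 g) := by
  have hreflect : ∑' k, ‖g (m - k)‖ₑ ^ 2 = ∑' k, ‖g k‖ₑ ^ 2 :=
    (Equiv.subLeft m).tsum_eq fun k => ‖g k‖ₑ ^ 2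
  rw [mulC, enorm_mul]
  gcongr
  calc ‖∑' k, f k * g (m - k)‖ₑ ≤ ∑' k, ‖f k‖ₑ * ‖g (m - k)‖ₑ := by
        simpa only [enorm_mul] using enorm_tsum_le_tsum_enorm (f := fun k => f k * g (m - k))
    _ ≤ (∑' k, ‖f k‖ₑ ^ 2) ^ (1 / 2 : ℝ) * (∑' k, ‖g (m - k)‖ₑ ^ 2) ^ (1 / 2 : ℝ) :=
        tsum_mul_le_L2_mul_L2 _ _
    _ = eL2 f * eL2 g := by rw [hreflect]; rfl

lemma mulC_blockOp_eq_zero (hsupp : ∀ ξ, φ ξ ≠ 0 → 3 / 4 ≤ |ξ| ∧ |ξ| ≤ 8 / 3)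
    {q i j : ℤ} (hij : i ≤ j + 2) (hqj : j + 4 < q) (f g : SF d) {m : Lat d}
    (hm : blockW φ b q m ≠ 0) : mulC b (blockOp φ b i f) (blockOp φ b j g) m = 0 := by
  have hterm (k : Lat d) : blockOp φ b i f k * blockOp φ b j g (m - k) = 0 := by
    by_contra h
    refine hqj.not_ge (le_add_four_of_blockW_ne_zero hsupp hij
      (mt (blockOp_eq_zero · f) (left_ne_zero_of_mul h))
      (mt (blockOp_eq_zero · g) (right_ne_zero_of_mul h)) ?_)
    rwa [add_sub_cancel]
  simp [mulC, hterm]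

/-- The sum of `‖Δ_i f‖_{L²} ‖Δ_j g‖_{L²}` over the pairs `|i - j| ≤ 2` that can meet the `q`-th
annulus: up to `|𝕋_b^d|^{-1/2}` it dominates every mode of `R(f,g)` there. -/
def remMajorant (φ : ℝ → ℝ) (b : Fin d → ℝ) (f g : SF d) (q : ℤ) : ℝ≥0∞ :=
  ∑' p : ℤ × ℤ, if |p.1 - p.2| ≤ 2 ∧ q ≤ p.2 + 4 then
    eL2 (blockOp φ b p.1 f) * eL2 (blockOp φ b p.2 g) else 0

lemma enorm_remC_le (hsupp : ∀ ξ, φ ξ ≠ 0 → 3 / 4 ≤ |ξ| ∧ |ξ| ≤ 8 / 3) (f g : SF d)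
    {q : ℤ} {m : Lat d} (hm : blockW φ b q m ≠ 0) :
    ‖remC φ b f g m‖ₑ ≤ ‖(Real.sqrt (vol b) : ℂ)⁻¹‖ₑ * remMajorant φ b f g q := by
  rw [remMajorant, ← ENNReal.tsum_mul_left]
  refine enorm_tsum_le_tsum_enorm.trans (ENNReal.tsum_le_tsum fun ⟨i, j⟩ => ?_)
  by_cases hij : |i - j| ≤ 2
  · by_cases hqj : q ≤ j + 4
    · simpa only [hij, hqj, and_self, if_true] using enorm_mulC_le b _ _ m
    · have hij' : i ≤ j + 2 := by linarith [(abs_le.1 hij).2]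
      simp [mulC_blockOp_eq_zero hsupp hij' (not_le.1 hqj) f g hm]
  · simp [hij]

lemma two_rpow_mul_add_le (q : ℤ) {i j : ℤ} (hij : |i - j| ≤ 2) (s₁ s₂ : ℝ) :
    (2 : ℝ≥0∞) ^ ((q : ℝ) * (s₁ + s₂)) ≤ (2 : ℝ≥0∞) ^ (2 * |s₁|) *
      ((2 : ℝ≥0∞) ^ ((i : ℝ) * s₁) *
        ((2 : ℝ≥0∞) ^ (((q - j : ℤ) : ℝ) * (s₁ + s₂)) * (2 : ℝ≥0∞) ^ ((j : ℝ) * s₂))) := by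
  have hshift : (j - i : ℝ) * s₁ ≤ 2 * |s₁| := by
    refine (le_abs_self _).trans ?_
    rw [abs_mul, abs_sub_comm]
    gcongr
    exact_mod_cast hij
  simp only [← ENNReal.rpow_add _ _ two_ne_zero ENNReal.ofNat_ne_top]
  refine ENNReal.rpow_le_rpow_of_exponent_le one_le_two ?_
  push_cast
  linarith

lemma two_rpow_mul_eL2_mul_eL2_le (φ : ℝ → ℝ) (b : Fin d → ℝ) {ζ : ℝ} {q i j : ℤ}
    (hq : ζ ≤ (2 : ℝ) ^ q) (hij : |i - j| ≤ 2) (hqj : q ≤ j + 4) (s₁ s₂ : ℝ) (f g : SF d) :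
    (2 : ℝ≥0∞) ^ ((q : ℝ) * (s₁ + s₂)) * (eL2 (blockOp φ b i f) * eL2 (blockOp φ b j g)) ≤
      (2 : ℝ≥0∞) ^ (2 * |s₁|) * (highBlock φ b (ζ / 64) s₁ f i *
        (cutoffKernel 4 (s₁ + s₂) (q - j) * highBlock φ b (ζ / 16) s₂ g j)) := by
  have hf : highBlock φ b (ζ / 64) s₁ f i = bw φ b s₁ f i := by
    have hqi : q ≤ i + 6 := by linarith [(abs_le.1 hij).1]
    convert highBlock_div_two_pow φ b 6 hq hqi s₁ f using 2
    norm_num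
  have hg : highBlock φ b (ζ / 16) s₂ g j = bw φ b s₂ g j := by
    convert highBlock_div_two_pow φ b 4 hq hqj s₂ g using 2
    norm_num
  rw [hf, hg, cutoffKernel, if_pos (by omega), bw, bw]
  refine (mul_le_mul_left (two_rpow_mul_add_le q hij s₁ s₂) _).trans_eq ?_
  ring

lemma two_rpow_mul_remMajorant_le (φ : ℝ → ℝ) (b : Fin d → ℝ) {ζ : ℝ} {q : ℤ} (hq : ζ ≤ (2 : ℝ) ^ q)
    (s₁ s₂ : ℝ) (f g : SF d) :
    (2 : ℝ≥0∞) ^ ((q : ℝ) * (s₁ + s₂)) * remMajorant φ b f g q ≤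
      (2 : ℝ≥0∞) ^ (2 * |s₁|) * (besovH φ b (ζ / 64) s₁ 1 f *
        ∑' j, cutoffKernel 4 (s₁ + s₂) (q - j) * highBlock φ b (ζ / 16) s₂ g j) := by
  rw [remMajorant, besovH_eq_lr_highBlock, lr_one, ← ENNReal.tsum_mul_right, ENNReal.tsum_prod']
  simp_rw [← ENNReal.tsum_mul_left]
  refine ENNReal.tsum_le_tsum fun i => ENNReal.tsum_le_tsum fun j => ?_
  split_ifs with h
  · exact two_rpow_mul_eL2_mul_eL2_le φ b hq h.1 h.2 s₁ s₂ f g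
  · simp

/-- The constant of the block estimate `highBlock_remC_le`: the lattice-point count of the annulus,
the bound `M` of the bump, the normalization of the product, and the weight lost by replacing
`2^{js₁}` with `2^{is₁}` for `|i - j| ≤ 2`. -/
def remainderConst (b : Fin d → ℝ) (M s₁ : ℝ) : ℝ≥0∞ :=
  ENNReal.ofReal (8 * ‖b‖) ^ ((d : ℝ) / 2) *
    (ENNReal.ofReal M * (‖(Real.sqrt (vol b) : ℂ)⁻¹‖ₑ * (2 : ℝ≥0∞) ^ (2 * |s₁|)))

lemma remainderConst_lt_top (b : Fin d → ℝ) (M s₁ : ℝ) : remainderConst b M s₁ < ⊤ := by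
  unfold remainderConst
  finiteness

lemma highBlock_remC_le (hb : ∀ i, 0 < b i)
    (hsupp : ∀ ξ, φ ξ ≠ 0 → 3 / 4 ≤ |ξ| ∧ |ξ| ≤ 8 / 3) {M : ℝ} (hM : ∀ ξ, |φ ξ| ≤ M)
    {s s₁ s₂ : ℝ} (hsum : s + (d : ℝ) / 2 = s₁ + s₂) (ζ : ℝ) (f g : SF d) (q : ℤ) :
    highBlock φ b ζ s (remC φ b f g) q ≤ remainderConst b M s₁ * besovH φ b (ζ / 64) s₁ 1 f *
      ∑' j, cutoffKernel 4 (s₁ + s₂) (q - j) * highBlock φ b (ζ / 16) s₂ g j := by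
  rw [highBlock]
  split_ifs with hq
  swap
  · exact zero_le
  set V := ‖(Real.sqrt (vol b) : ℂ)⁻¹‖ₑ
  set B := ENNReal.ofReal (8 * ‖b‖) ^ ((d : ℝ) / 2)
  set S := remMajorant φ b f g q
  calc bw φ b s (remC φ b f g) q
      ≤ (2 : ℝ≥0∞) ^ ((q : ℝ) * s) *
          (B * (2 : ℝ≥0∞) ^ ((q : ℝ) * ((d : ℝ) / 2)) * (ENNReal.ofReal M * (V * S))) :=
        mul_le_mul_right (eL2_blockOp_le hb hsupp hM fun k hk => enorm_remC_le hsupp f g hk) _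
    _ = B * (ENNReal.ofReal M * (V * ((2 : ℝ≥0∞) ^ ((q : ℝ) * (s₁ + s₂)) * S))) := by
        rw [← hsum, mul_add, ENNReal.rpow_add _ _ two_ne_zero ENNReal.ofNat_ne_top]
        ring
    _ ≤ B * (ENNReal.ofReal M * (V * ((2 : ℝ≥0∞) ^ (2 * |s₁|) * (besovH φ b (ζ / 64) s₁ 1 f *
          ∑' j, cutoffKernel 4 (s₁ + s₂) (q - j) * highBlock φ b (ζ / 16) s₂ g j)))) := by
        gcongr B * (ENNReal.ofReal M * (V * ?_))
        exact two_rpow_mul_remMajorant_le φ b hq s₁ s₂ f g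
    _ = _ := by
        rw [remainderConst]
        ring

end Remainder

theorem stmt_9_general (b : Fin d → ℝ) (hb : ∀ i, 0 < b i) (φ : ℝ → ℝ)
    (hsupp : ∀ ξ, φ ξ ≠ 0 → 3 / 4 ≤ |ξ| ∧ |ξ| ≤ 8 / 3) (M : ℝ) (hM : ∀ ξ, |φ ξ| ≤ M)
    (s s₁ s₂ : ℝ) (hsum : s + (d : ℝ) / 2 = s₁ + s₂) (hs : -(d : ℝ) / 2 < s)
    (r : ℝ≥0∞) (hr : 1 ≤ r) :
    ∃ C : ℝ≥0∞, C < ⊤ ∧ ∀ (ζ : ℝ) (f g : SF d),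
      besovH φ b ζ s r (remC φ b f g) ≤
        C * besovH φ b (ζ / 64) s₁ 1 f * besovH φ b (ζ / 16) s₂ r g := by
  have hσ : 0 < s₁ + s₂ := by linarith
  set κ := cutoffKernel 4 (s₁ + s₂)
  set K := remainderConst b M s₁
  refine ⟨K * ∑' n, κ n,
    ENNReal.mul_lt_top (remainderConst_lt_top b M s₁) (tsum_cutoffKernel_lt_top 4 hσ),
    fun ζ f g => ?_⟩
  set F := besovH φ b (ζ / 64) s₁ 1 f
  calc besovH φ b ζ s r (remC φ b f g)
      ≤ lr r (fun q => K * F * ∑' j, κ (q - j) * highBlock φ b (ζ / 16) s₂ g j) :=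
        lr_mono r (highBlock_remC_le hb hsupp hM hsum ζ f g)
    _ = K * F * lr r (fun q => ∑' j, κ (q - j) * highBlock φ b (ζ / 16) s₂ g j) :=
        lr_const_mul (one_pos.trans_le hr).ne' _ _
    _ ≤ K * F * ((∑' n, κ n) * besovH φ b (ζ / 16) s₂ r g) := by
        gcongr
        exact lr_conv_le hr κ _
    _ = K * (∑' n, κ n) * F * besovH φ b (ζ / 16) s₂ r g := by ring

/-- (Remainder high-frequency estimate.) If `s + d/2 = s₁ + s₂` and
`s > -d/2`, then
`‖R(f,g)‖^{h;ζ}_{B^s_{2,r}} ≤ C‖f‖^{h;ζ/64}_{B^{s₁}_{2,1}}‖g‖^{h;ζ/16}_{B^{s₂}_{2,r}}`,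
with `C` independent of `f`, `g`, `ζ`. -/
theorem stmt_9
    {d : ℕ} (hd : 2 ≤ d) (b : Fin d → ℝ) (hb : ∀ i, 0 < b i)
    (φ : ℝ → ℝ) (hφ : GoodBump φ)
    (s s₁ s₂ : ℝ) (hsum : s + (d:ℝ)/2 = s₁ + s₂) (hs : -(d:ℝ)/2 < s)
    (r : ℝ≥0∞) (hr : 1 ≤ r) :
    ∃ C : ℝ≥0∞, C < ⊤ ∧
      ∀ ζ : ℝ, 0 < ζ → ∀ f g : SF d,
        besovN φ b s₁ 1 f < ⊤ → besovN φ b s₂ r g < ⊤ →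
        besovH φ b ζ s r (remC φ b f g) ≤
          C * besovH φ b (ζ/64) s₁ 1 f * besovH φ b (ζ/16) s₂ r g := by
  obtain ⟨C, hC, hbound⟩ :=
    stmt_9_general b hb φ hφ.2.2.1 1 hφ.abs_le_one s s₁ s₂ hsum hs r hr
  exact ⟨C, hC, fun ζ _ f g _ _ => hbound ζ f g⟩

end LowMach
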